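/- For weak compositions a and b of length n, the product of fundamental slide polynomials expands as 𝔉_a · 𝔉_b = Σ_c [c | a ⧢ b] 𝔉_c, where [c | a ⧢ b] is the multiplicity of the weak composition c in the slide product a ⧢ b. -/

import Mathlib

open scoped Classical

namespace SlidePaper

/-- Sum of the first `i` entries of a weak composition of length `n`. -/
def psum {n : ℕ} (a : Fin n → ℕ) (i : ℕ) : ℕ :=
  ∑ j ∈ Finset.univ.filter (fun j : Fin n => (j : ℕ) < i), a j

/-- `b` dominates `a`: all partial sums of `b` are at least those of `a`. -/
def Dominates {n : ℕ} (b a : Fin n → ℕ) : Prop :=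
  ∀ i : Fin (n + 1), psum a i ≤ psum b i

/-- The flattening of a weak composition: the list of its nonzero entries in order. -/
def flat {n : ℕ} (a : Fin n → ℕ) : List ℕ :=
  (List.ofFn a).filter (fun x => x ≠ 0)

/-- `β` refines `α`: `β` splits into consecutive blocks with sums `α₁, α₂, …`. -/
def Refines (β α : List ℕ) : Prop :=
  ∃ L : List (List ℕ), L.flatten = β ∧ L.map List.sum = α

/-- All weak compositions of length `n` with entries at most `k`. -/
def wcFinset (n k : ℕ) : Finset (Fin n → ℕ) :=
  Fintype.piFinset fun _ => Finset.range (k + 1)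

/-- The monomial slide polynomial `𝔐_a`. -/
noncomputable def slideM {n : ℕ} (a : Fin n → ℕ) : MvPolynomial (Fin n) ℤ :=
  ∑ b ∈ (wcFinset n (∑ i, a i)).filter (fun b => Dominates b a ∧ flat b = flat a),
    MvPolynomial.monomial (Finsupp.equivFunOnFinite.symm b) 1

/-- The fundamental slide polynomial `𝔉_a`. -/
noncomputable def slideF {n : ℕ} (a : Fin n → ℕ) : MvPolynomial (Fin n) ℤ :=
  ∑ b ∈ (wcFinset n (∑ i, a i)).filter (fun b => Dominates b a ∧ Refines (flat b) (flat a)),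
    MvPolynomial.monomial (Finsupp.equivFunOnFinite.symm b) 1

/-- A weak composition is quasi-flat if its nonzero entries occupy consecutive positions. -/
def QuasiFlat {n : ℕ} (a : Fin n → ℕ) : Prop :=
  ∀ i j l : Fin n, i ≤ j → j ≤ l → a i ≠ 0 → a l ≠ 0 → a j ≠ 0

/-- `b` strongly dominates `a`. -/
def StronglyDominates {n : ℕ} (b a : Fin n → ℕ) : Prop :=
  Dominates b a ∧ ∀ c : Fin n → ℕ, Dominates c a → flat c = flat b → Dominates c b

/-- The exponent vector placing the parts of `α` at the positions `i`. -/
noncomputable def placeExp {n : ℕ} (α : List ℕ) (i : Fin α.length → Fin n) : Fin n →₀ ℕ :=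
  ∑ t : Fin α.length, Finsupp.single (i t) (α.get t)

/-- `f` is quasisymmetric in the variables `x_1, …, x_k` (0-indexed: `x_0, …, x_{k-1}`). -/
def IsQuasisymmetricIn {n : ℕ} (k : ℕ) (f : MvPolynomial (Fin n) ℤ) : Prop :=
  ∀ α : List ℕ, (∀ x ∈ α, 0 < x) →
    ∀ i j : Fin α.length → Fin n, StrictMono i → StrictMono j →
      (∀ t, (i t : ℕ) < k) → (∀ t, (j t : ℕ) < k) →
      MvPolynomial.coeff (placeExp α i) f = MvPolynomial.coeff (placeExp α j) f

/-- The monomial quasisymmetric polynomial `M_α(x_1, …, x_k)` inside `ℤ[x_1, …, x_n]`. -/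
noncomputable def Mqs (n k : ℕ) (α : List ℕ) : MvPolynomial (Fin n) ℤ :=
  ∑ i ∈ (Finset.univ : Finset (Fin α.length → Fin n)).filter
      (fun i : Fin α.length → Fin n => StrictMono i ∧ ∀ t, (i t : ℕ) < k),
    ∏ t : Fin α.length, (MvPolynomial.X (i t) : MvPolynomial (Fin n) ℤ) ^ α.get t

/-- The fundamental quasisymmetric polynomial `F_α(x_1, …, x_k)` inside `ℤ[x_1, …, x_n]`. -/
noncomputable def Fqs (n k : ℕ) (α : List ℕ) : MvPolynomial (Fin n) ℤ :=
  ∑ c ∈ (Finset.univ : Finset (Composition α.sum)).filter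
      (fun c => Refines c.blocks α ∧ c.blocks.length ≤ k),
    Mqs n k c.blocks

/-- Place the weak composition `a` (of length `N`) at offset `k` inside length `M`. -/
def shiftComp {N : ℕ} (k M : ℕ) (a : Fin N → ℕ) : Fin M → ℕ :=
  fun i => if h : k ≤ (i : ℕ) ∧ (i : ℕ) - k < N then a ⟨(i : ℕ) - k, h.2⟩ else 0

/-- Spread the values `g` to positions `ι` inside a weak composition of length `n`. -/
def spread {l n : ℕ} (ι : Fin l → Fin n) (g : Fin l → ℕ) : Fin n → ℕ :=
  fun i => ∑ k, if ι k = i then g k else 0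

/-- The monomial quasisymmetric function `M_α` in infinitely many variables. -/
noncomputable def MqsFun (α : List ℕ) : MvPowerSeries ℕ ℤ :=
  fun d => if ∃ i : Fin α.length → ℕ, StrictMono i ∧
      d = ∑ t : Fin α.length, Finsupp.single (i t) (α.get t) then 1 else 0

/-- The fundamental quasisymmetric function `F_α` in infinitely many variables. -/
noncomputable def FqsFun (α : List ℕ) : MvPowerSeries ℕ ℤ :=
  ∑ c ∈ (Finset.univ : Finset (Composition α.sum)).filter (fun c => Refines c.blocks α),
    MqsFun c.blocks

/-- The cells of the Young diagram of `lam` (French notation): row `r` (from the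
bottom, 0-indexed) has `lam.get r` cells. -/
abbrev Cells (lam : List ℕ) := Σ r : Fin lam.length, Fin (lam.get r)

/-- A filling of `lam` with entries in `{1, …, n}` (encoded as `Fin n`) is a semistandard
Young tableau: rows weakly increase left to right, columns strictly increase bottom to top. -/
def IsSSYT {n : ℕ} {lam : List ℕ} (T : Cells lam → Fin n) : Prop :=
  (∀ (r : Fin lam.length) (c c' : Fin (lam.get r)), c ≤ c' → T ⟨r, c⟩ ≤ T ⟨r, c'⟩) ∧
  (∀ (r r' : Fin lam.length) (c' : Fin (lam.get r')) (h : (c' : ℕ) < lam.get r),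
      (r : ℕ) < (r' : ℕ) → T ⟨r, ⟨c', h⟩⟩ < T ⟨r', c'⟩)

/-- The weight of a filling: the `v`-th entry counts the occurrences of the value `v`. -/
def wtT {n : ℕ} {lam : List ℕ} (T : Cells lam → Fin n) : Fin n → ℕ :=
  fun v => (Finset.univ.filter (fun x : Cells lam => T x = v)).card

/-- A filling is quasi-Yamanouchi if for every value `v > 1`, the leftmost occurrence of `v`
lies weakly left of some occurrence of `v - 1`. -/
def IsQY {n : ℕ} {lam : List ℕ} (T : Cells lam → Fin n) : Prop :=
  ∀ (v : Fin n) (x : Cells lam), T x = v → 0 < (v : ℕ) →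
    (∀ y : Cells lam, T y = v → (x.2 : ℕ) ≤ (y.2 : ℕ)) →
    ∃ z : Cells lam, (T z : ℕ) + 1 = (v : ℕ) ∧ (x.2 : ℕ) ≤ (z.2 : ℕ)

/-- The Schur polynomial `s_lam(x_1, …, x_n)` as the generating function of
semistandard Young tableaux. -/
noncomputable def schurPoly (n : ℕ) (lam : List ℕ) : MvPolynomial (Fin n) ℤ :=
  ∑ T ∈ (Finset.univ : Finset (Cells lam → Fin n)).filter (fun T => IsSSYT T),
    MvPolynomial.monomial (Finsupp.equivFunOnFinite.symm (wtT T)) 1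

/-- One destandardization step on fillings: for some value `v` occurring in `T` whose
leftmost occurrence is strictly right of every occurrence of `v - 1`, every `v` is
decremented to `v - 1`. -/
def TabStep {n : ℕ} {lam : List ℕ} (T T' : Cells lam → Fin n) : Prop :=
  ∃ v : Fin n, 0 < (v : ℕ) ∧ (∃ x, T x = v) ∧
    (∀ x y : Cells lam, T x = v → (T y : ℕ) + 1 = (v : ℕ) → (y.2 : ℕ) < (x.2 : ℕ)) ∧
    ∀ x : Cells lam, (T' x : ℕ) = if T x = v then (v : ℕ) - 1 else (T x : ℕ)

/-- The reading word of a set of crosses: rows are read from top to bottom, each row from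
left to right, the cross in (0-indexed) row `i` and column `j` recording the letter `i + j`
(representing the simple transposition swapping `i + j` and `i + j + 1` of `{0, 1, 2, …}`). -/
def readWord (P : Finset (ℕ × ℕ)) : List ℕ :=
  ((List.range (P.sup Prod.fst + 1)).reverse).flatMap
    (fun i => ((List.range (P.sup Prod.snd + 1)).filter (fun j => decide ((i, j) ∈ P))).map
      (fun j => i + j))

/-- The permutation `s_{i_ℓ} ⋯ s_{i_1}` associated to the word `(i_1, …, i_ℓ)`,
where `s_k` swaps `k` and `k + 1`. -/
def wordPerm (l : List ℕ) : Equiv.Perm ℕ :=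
  ((l.map (fun k => Equiv.swap k (k + 1))).reverse).prod

/-- A word is reduced if no shorter word has the same product. -/
def IsReducedWord (l : List ℕ) : Prop :=
  ∀ l' : List ℕ, wordPerm l' = wordPerm l → l.length ≤ l'.length

/-- `P` is a reduced pipe dream of shape `w`: the pipes trace out `w` and no two pipes
cross more than once, equivalently the reading word of `P` is a reduced word for `w`. -/
def IsPD (w : Equiv.Perm ℕ) (P : Finset (ℕ × ℕ)) : Prop :=
  wordPerm (readWord P) = w ∧ IsReducedWord (readWord P)

/-- `P` is a quasi-Yamanouchi pipe dream of shape `w`: for every row, the westernmost cross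
is in the first column or lies weakly west of some cross in the row above. -/
def IsQPD (w : Equiv.Perm ℕ) (P : Finset (ℕ × ℕ)) : Prop :=
  IsPD w P ∧ ∀ i j : ℕ, (i, j) ∈ P → (∀ j', (i, j') ∈ P → j ≤ j') →
    (j = 0 ∨ ∃ j', (i + 1, j') ∈ P ∧ j ≤ j')

/-- One destandardization step on pipe dreams: a row with no cross in the first column,
all of whose crosses lie strictly east of every cross in the row above, has all its
crosses moved one step northwest. -/
def PDStep (P P' : Finset (ℕ × ℕ)) : Prop :=
  ∃ r : ℕ, (∃ j, (r, j) ∈ P) ∧ (r, 0) ∉ P ∧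
    (∀ j j', (r, j) ∈ P → (r + 1, j') ∈ P → j' < j) ∧
    P' = P.filter (fun p => p.1 ≠ r) ∪
      (P.filter (fun p => p.1 = r)).image (fun p => (r + 1, p.2 - 1))

/-- The number of crosses of `P` in (0-indexed) row `i`. -/
def rowWt (P : Finset (ℕ × ℕ)) (i : ℕ) : ℕ := (P.filter (fun p => p.1 = i)).card

/-- The weight of a pipe dream, as a weak composition of length `n`. -/
def wtFin (n : ℕ) (P : Finset (ℕ × ℕ)) : Fin n → ℕ := fun i => rowWt P (i : ℕ)

/-- The flattened weight of a pipe dream: the list of nonzero row counts, bottom row first. -/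
def flatWt (P : Finset (ℕ × ℕ)) : List ℕ :=
  ((List.range (P.sup Prod.fst + 1)).map (rowWt P)).filter (fun x => x ≠ 0)

/-- The Schubert polynomial of `w` in the variables `x_1, …, x_n`, as the generating
function of reduced pipe dreams of shape `w`. -/
noncomputable def SchubertPoly (n : ℕ) (w : Equiv.Perm ℕ) : MvPolynomial (Fin n) ℤ :=
  ∑ᶠ P ∈ {P : Finset (ℕ × ℕ) | IsPD w P},
    MvPolynomial.monomial (Finsupp.equivFunOnFinite.symm (wtFin n P)) 1

/-- The Lehmer code of `w` (0-indexed): `lehmer w i` counts `j > i` with `w j < w i`. -/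
noncomputable def lehmer (w : Equiv.Perm ℕ) (i : ℕ) : ℕ :=
  Set.ncard {j : ℕ | i < j ∧ w j < w i}

/-- The Lehmer code of `w` as a weak composition of length `n`. -/
noncomputable def lehmerFin (n : ℕ) (w : Equiv.Perm ℕ) : Fin n → ℕ :=
  fun i => lehmer w (i : ℕ)

/-- The number of inversions of `w`. -/
noncomputable def invCount (w : Equiv.Perm ℕ) : ℕ :=
  Set.ncard {p : ℕ × ℕ | p.1 < p.2 ∧ w p.2 < w p.1}

/-- The largest entry of the Lehmer code of `w`. -/
noncomputable def maxLehmer (w : Equiv.Perm ℕ) : ℕ :=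
  sSup (Set.range (lehmer w))

/-- The (0-indexed) position of the first descent of `w`. -/
noncomputable def firstDescent (w : Equiv.Perm ℕ) : ℕ :=
  sInf {i : ℕ | w (i + 1) < w i}

/-- `δ(w) = 1` if every position attaining `max(L(w))` is at or before the first descent,
and `δ(w) = 0` otherwise. -/
noncomputable def delta (w : Equiv.Perm ℕ) : ℤ :=
  if ∀ i : ℕ, lehmer w i = maxLehmer w → i ≤ firstDescent w then 1 else 0

/-- `η(w) = inv(w) − max(L(w)) + δ(w) − min{i : w_i > w_{i+1}}`. -/
noncomputable def eta (w : Equiv.Perm ℕ) : ℤ :=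
  (invCount w : ℤ) - (maxLehmer w : ℤ) + delta w - ((firstDescent w : ℤ) + 1)

/-- The decomposition of a list into maximal strictly increasing runs. -/
def runsStrict : List ℕ → List (List ℕ)
  | [] => []
  | x :: rest =>
    match runsStrict rest, rest with
    | r :: rs, y :: _ => if x < y then (x :: r) :: rs else [x] :: r :: rs
    | _, _ => [[x]]

/-- The descent composition of a word: lengths of its maximal increasing runs, a new run
beginning whenever a letter is followed by a weakly smaller letter. -/
def desStrict (l : List ℕ) : List ℕ := (runsStrict l).map List.length

/-- The decomposition of a list into maximal weakly increasing runs. -/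
def runsWeak : List ℕ → List (List ℕ)
  | [] => []
  | x :: rest =>
    match runsWeak rest, rest with
    | r :: rs, y :: _ => if x ≤ y then (x :: r) :: rs else [x] :: r :: rs
    | _, _ => [[x]]

/-- The descent composition of a word: the lengths of its maximal weakly increasing runs. -/
def desComp (l : List ℕ) : List ℕ := (runsWeak l).map List.length

/-- The permutation `1^m × w`, fixing `0, …, m-1` and acting by `w` shifted by `m` above. -/
def shiftPerm (m : ℕ) (w : Equiv.Perm ℕ) : Equiv.Perm ℕ where
  toFun i := if i < m then i else w (i - m) + m
  invFun i := if i < m then i else w.symm (i - m) + m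
  left_inv i := by
    dsimp only
    by_cases h : i < m
    · simp [h]
    · have h2 : ¬ (w (i - m) + m < m) := by omega
      rw [if_neg h, if_neg h2, Nat.add_sub_cancel, Equiv.symm_apply_apply]
      omega
  right_inv i := by
    dsimp only
    by_cases h : i < m
    · simp [h]
    · have h2 : ¬ (w.symm (i - m) + m < m) := by omega
      rw [if_neg h, if_neg h2, Nat.add_sub_cancel, Equiv.apply_symm_apply]
      omega

/-- The quasi-shuffle product of two (strong) compositions, as a multiset of compositions. -/
def qShuffle : List ℕ → List ℕ → Multiset (List ℕ)
  | [], β => {β}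
  | α, [] => {α}
  | a :: α, b :: β =>
      ((qShuffle α (b :: β)).map (a :: ·)) + ((qShuffle (a :: α) β).map (b :: ·)) +
        ((qShuffle α β).map ((a + b) :: ·))
termination_by α β => α.length + β.length
decreasing_by all_goals (simp only [List.length_cons]; omega)

def shuffles : List ℕ → List ℕ → Multiset (List ℕ)
  | [], B => {B}
  | A, [] => {A}
  | x :: A, y :: B =>
      ((shuffles A (y :: B)).map (x :: ·)) + ((shuffles (x :: A) B).map (y :: ·))
termination_by A B => A.length + B.length
decreasing_by all_goals (simp only [List.length_cons]; omega)

/-- The word `(2n-1)^{a_1} (2n-3)^{a_2} ⋯ 1^{a_n}` associated to a weak composition `a`. -/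
def wordA {n : ℕ} (a : Fin n → ℕ) : List ℕ :=
  (List.ofFn (fun i : Fin n => List.replicate (a i) (2 * n - 2 * (i : ℕ) - 1))).flatten

/-- The word `(2n)^{b_1} (2n-2)^{b_2} ⋯ 2^{b_n}` associated to a weak composition `b`. -/
def wordB {n : ℕ} (b : Fin n → ℕ) : List ℕ :=
  (List.ofFn (fun i : Fin n => List.replicate (b i) (2 * n - 2 * (i : ℕ)))).flatten

/-- A list (padded with trailing zeros) dominates a weak composition of length `n`. -/
def DominatesList {n : ℕ} (l : List ℕ) (a : Fin n → ℕ) : Prop :=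
  ∀ i : Fin (n + 1), psum a (i : ℕ) ≤ ((l.take (i : ℕ)).sum)

/-- The number of letters of the `A`-word (the odd letters) in the `k`-th weakly
increasing run of `C`. -/
def runCountA (C : List ℕ) (k : Fin (runsWeak C).length) : ℕ :=
  (((runsWeak C).get k).filter (fun z => z % 2 = 1)).length

/-- The number of letters of the `B`-word (the even letters) in the `k`-th weakly
increasing run of `C`. -/
def runCountB (C : List ℕ) (k : Fin (runsWeak C).length) : ℕ :=
  (((runsWeak C).get k).filter (fun z => z % 2 = 0)).length

/-- The length of the `k`-th weakly increasing run of `C`. -/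
def runLen (C : List ℕ) (k : Fin (runsWeak C).length) : ℕ :=
  ((runsWeak C).get k).length

/-- `c = bump_{(a,b)}(C)`: the unique weak composition of length `n` obtained by inserting
zero parts into `Des(C)` so that the correspondingly placed `Des_A` and `Des_B` dominate
`a` and `b`, minimal in dominance order among all such insertions. -/
def IsBumpS {n : ℕ} (a b : Fin n → ℕ) (C : List ℕ) (c : Fin n → ℕ) : Prop :=
  ∃ ι : Fin (runsWeak C).length → Fin n, StrictMono ι ∧
    c = spread ι (runLen C) ∧
    Dominates (spread ι (runCountA C)) a ∧ Dominates (spread ι (runCountB C)) b ∧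
    ∀ ι' : Fin (runsWeak C).length → Fin n, StrictMono ι' →
      Dominates (spread ι' (runCountA C)) a → Dominates (spread ι' (runCountB C)) b →
      Dominates (spread ι' (runLen C)) c

/-- The multiplicity `[c ∣ a ⧢ b]` of `c` in the slide product of `a` and `b`: the number of
shuffles `C` of the words of `a` and `b` lying in the shuffle set `SS(a,b)` with
`bump_{(a,b)}(C) = c`. -/
noncomputable def slideMult {n : ℕ} (a b c : Fin n → ℕ) : ℕ :=
  Multiset.card ((shuffles (wordA a) (wordB b)).filter
    (fun C => DominatesList ((runsWeak C).map
        (fun r => (r.filter (fun z => z % 2 = 1)).length)) a ∧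
      DominatesList ((runsWeak C).map (fun r => (r.filter (fun z => z % 2 = 0)).length)) b ∧
      IsBumpS a b C c))

/-- Membership in the quasi-shuffle set `QSS(a,b)`: a pair `(γ_a, γ_b)` of weak compositions
of a common length at most `n` with `γ_a ≥ a`, `flat(γ_a) = flat(a)`, `γ_b ≥ b`,
`flat(γ_b) = flat(b)` (after padding with trailing zeros), and all entries of
`γ_a + γ_b` positive. -/
def InQSS {n : ℕ} (a b : Fin n → ℕ) (x : (l : ℕ) × (Fin l → ℕ) × (Fin l → ℕ)) : Prop :=
  x.1 ≤ n ∧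
  Dominates (shiftComp 0 n x.2.1) a ∧ flat x.2.1 = flat a ∧
  Dominates (shiftComp 0 n x.2.2) b ∧ flat x.2.2 = flat b ∧
  ∀ k : Fin x.1, 0 < x.2.1 k + x.2.2 k

/-- `c = bump_{(a,b)}(γ_a, γ_b)`: the unique weak composition `c` of length `n` with
`flat(c) = γ_a + γ_b` whose decomposition `c = c_a + c_b` satisfies `c_a ≥ a` and
`c_b ≥ b`, minimal in dominance order among all such compositions. -/
def IsBumpQ {n : ℕ} (a b : Fin n → ℕ) (x : (l : ℕ) × (Fin l → ℕ) × (Fin l → ℕ))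
    (c : Fin n → ℕ) : Prop :=
  ∃ ι : Fin x.1 → Fin n, StrictMono ι ∧
    c = spread ι (fun k => x.2.1 k + x.2.2 k) ∧
    Dominates (spread ι x.2.1) a ∧ Dominates (spread ι x.2.2) b ∧
    ∀ ι' : Fin x.1 → Fin n, StrictMono ι' →
      Dominates (spread ι' x.2.1) a → Dominates (spread ι' x.2.2) b →
      Dominates (spread ι' (fun k => x.2.1 k + x.2.2 k)) c

/-- The multiplicity `[c ∣ a ⧻ b]` of `c` in the quasi-slide product of `a` and `b`: the
number of pairs in the quasi-shuffle set `QSS(a,b)` whose bump is `c`. -/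
noncomputable def qsMult {n : ℕ} (a b c : Fin n → ℕ) : ℕ :=
  Nat.card {x : (l : ℕ) × (Fin l → ℕ) × (Fin l → ℕ) // InQSS a b x ∧ IsBumpQ a b x c}

/-- The Stanley symmetric function `S_w`. -/
noncomputable def StanleySym (w : Equiv.Perm ℕ) : MvPowerSeries ℕ ℤ :=
  ∑ᶠ l ∈ {l : List ℕ | wordPerm l = w ∧ IsReducedWord l}, FqsFun (desStrict l)

/-!
The slide polynomial `𝔉_a` is the generating polynomial of the placements of the word `wordA a`:
weakly increasing assignments of positions to its letters that increase strictly across descents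
and keep each letter weakly before its original position. Such a placement is a lexicographically
increasing sequence of biletters (position, letter), so a placement of `A` and a placement of `B`,
having no letter in common, merge in exactly one way into a placement of a shuffle of `A` and `B`.
Hence `𝔉_a * 𝔉_b` is the sum of the generating polynomials of the placements of the shuffles.

For a single shuffle `C`, placements increase strictly from each run to the next, and raising every
letter to the position of the last letter of its run turns a placement into an insertion of zeros
into `Des(C)`. Insertions are closed under pointwise suprema, so if there is one there is a greatest
one, the bump; the placements of `C` are then exactly the fillings counted by the slide polynomial
of the bump. If there is no insertion there is no placement either.
-/

section Refinement

/-- The sums of the initial segments of a list. A list with positive entries is determined by its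
partial sums, and refinement becomes inclusion of the sets of partial sums. -/
def partialSums (l : List ℕ) : Set ℕ :=
  Set.range fun k => (l.take k).sum

theorem zero_mem_partialSums (l : List ℕ) : 0 ∈ partialSums l :=
  ⟨0, by simp⟩

theorem le_sum_of_mem_partialSums {l : List ℕ} {s : ℕ} (h : s ∈ partialSums l) : s ≤ l.sum := by
  obtain ⟨k, rfl⟩ := h
  exact (List.take_sublist k l).sum_le_sum fun _ _ => Nat.zero_le _

theorem partialSums_append (l l' : List ℕ) :
    partialSums (l ++ l') = partialSums l ∪ (l.sum + ·) '' partialSums l' := by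
  ext s
  constructor
  · rintro ⟨k, rfl⟩
    rcases le_total k l.length with hk | hk
    · exact Or.inl ⟨k, by simp [List.take_append_of_le_length hk]⟩
    · exact Or.inr ⟨_, ⟨k - l.length, rfl⟩, by simp [List.take_append, List.take_of_length_le hk]⟩
  · rintro (⟨k, rfl⟩ | ⟨_, ⟨k, rfl⟩, rfl⟩)
    · refine ⟨min k l.length, ?_⟩
      simp only [List.take_append_of_le_length (min_le_right k l.length), ← List.take_eq_take_min]
    · exact ⟨l.length + k, by simp only [List.take_length_add_append, List.sum_append]⟩

theorem partialSums_cons (x : ℕ) (l : List ℕ) :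
    partialSums (x :: l) = insert 0 ((x + ·) '' partialSums l) := by
  ext s
  constructor
  · rintro ⟨_ | k, rfl⟩
    · simp
    · exact Or.inr ⟨_, ⟨k, rfl⟩, by simp⟩
  · rintro (rfl | ⟨_, ⟨k, rfl⟩, rfl⟩)
    · exact zero_mem_partialSums _
    · exact ⟨k + 1, by simp⟩

theorem partialSums_filter_ne_zero (l : List ℕ) :
    partialSums (l.filter fun x => x ≠ 0) = partialSums l := by
  induction l with
  | nil => rfl
  | cons x l ih =>
    rcases eq_or_ne x 0 with rfl | hx
    · rw [List.filter_cons_of_neg (by simp), partialSums_cons, ih]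
      simp [Set.insert_eq_of_mem (zero_mem_partialSums l)]
    · rw [List.filter_cons_of_pos (by simpa using hx), partialSums_cons, partialSums_cons, ih]

theorem sum_filter_ne_zero (l : List ℕ) : (l.filter fun x => x ≠ 0).sum = l.sum := by
  induction l with
  | nil => rfl
  | cons x l ih => by_cases hx : x = 0 <;> simp_all

theorem partialSums_map_sum_subset (L : List (List ℕ)) :
    partialSums (L.map List.sum) ⊆ partialSums L.flatten := by
  induction L with
  | nil => rfl
  | cons l L ih =>
    rw [List.map_cons, List.flatten_cons, partialSums_cons, partialSums_append]
    exact Set.insert_subset (Or.inl (zero_mem_partialSums l))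
      ((Set.image_mono ih).trans Set.subset_union_right)

theorem refines_of_partialSums_subset {α β : List ℕ} (hβ : ∀ x ∈ β, x ≠ 0)
    (hsum : α.sum = β.sum) (h : partialSums α ⊆ partialSums β) : Refines β α := by
  induction α generalizing β with
  | nil =>
    cases β with
    | nil => exact ⟨[], rfl, rfl⟩
    | cons y β => exact absurd (Nat.eq_zero_of_add_eq_zero_right hsum.symm) (hβ y (by simp))
  | cons x α ih =>
    rw [partialSums_cons] at h
    obtain ⟨m, hm : (β.take m).sum = x⟩ :=
      h (Or.inr ⟨0, zero_mem_partialSums α, rfl⟩)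
    rw [← List.take_append_drop m β, List.sum_append, hm, List.sum_cons] at hsum
    rw [← List.take_append_drop m β, partialSums_append, hm] at h
    obtain ⟨L, hL, rfl⟩ := ih (fun y hy => hβ y (List.mem_of_mem_drop hy))
      (Nat.add_left_cancel hsum) fun s hs => by
        rcases h (Or.inr ⟨s, hs, rfl⟩) with hs' | ⟨t, ht, hts⟩
        · have := le_sum_of_mem_partialSums hs'
          rw [show s = 0 by simp only at this; omega]
          exact zero_mem_partialSums _
        · rwa [← Nat.add_left_cancel hts]
    exact ⟨β.take m :: L, by rw [List.flatten_cons, hL, List.take_append_drop],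
      by rw [List.map_cons, hm]⟩

theorem refines_iff {α β : List ℕ} (hβ : ∀ x ∈ β, x ≠ 0) :
    Refines β α ↔ α.sum = β.sum ∧ partialSums α ⊆ partialSums β := by
  refine ⟨?_, fun h => refines_of_partialSums_subset hβ h.1 h.2⟩
  rintro ⟨L, rfl, rfl⟩
  exact ⟨List.sum_flatten.symm, partialSums_map_sum_subset L⟩

variable {n : ℕ}

theorem psum_eq_sum_take (f : Fin n → ℕ) (k : ℕ) : psum f k = ((List.ofFn f).take k).sum := by
  rw [psum, Finset.sum_filter]
  induction n generalizing k with
  | zero => simp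
  | succ n ih =>
    cases k with
    | zero => simp
    | succ k =>
      rw [List.ofFn_succ, List.take_succ_cons, List.sum_cons, ← ih, Fin.sum_univ_succ]
      simp

theorem partialSums_flat (f : Fin n → ℕ) : partialSums (flat f) = Set.range (psum f) := by
  rw [flat, partialSums_filter_ne_zero, partialSums]
  exact congrArg Set.range (funext fun k => (psum_eq_sum_take f k).symm)

theorem refines_flat_iff {f g : Fin n → ℕ} :
    Refines (flat f) (flat g) ↔
      ∑ i, g i = ∑ i, f i ∧ Set.range (psum g) ⊆ Set.range (psum f) := by
  rw [refines_iff (by simp [flat]), partialSums_flat, partialSums_flat, flat, flat,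
    sum_filter_ne_zero, sum_filter_ne_zero, List.sum_ofFn, List.sum_ofFn]

end Refinement

section Content

theorem card_le_card_iff_subset_of_isLowerSet {J : Type*} [LinearOrder J] {s t : Finset J}
    (hs : IsLowerSet (s : Set J)) (ht : IsLowerSet (t : Set J)) : s.card ≤ t.card ↔ s ⊆ t := by
  refine ⟨fun h => ?_, Finset.card_le_card⟩
  rcases hs.total ht with h' | h'
  · exact_mod_cast h'
  · exact (Finset.eq_of_subset_of_card_le (by exact_mod_cast h') h).symm.subset

variable {n : ℕ} {J : Type*} [Fintype J]

/-- The content of a filling `u` of `J` with positions `0, …, n - 1`: the weak composition recording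
how often each position is used. -/
def content (u : J → Fin n) : Fin n → ℕ :=
  fun i => (Finset.univ.filter fun j => u j = i).card

theorem psum_content (u : J → Fin n) (k : ℕ) :
    psum (content u) k = (Finset.univ.filter fun j => (u j : ℕ) < k).card := by
  have := Finset.sum_card_fiberwise_eq_card_filter Finset.univ
    (Finset.univ.filter fun i : Fin n => (i : ℕ) < k) u
  simpa [psum, content] using this

theorem sum_content (u : J → Fin n) : ∑ i, content u i = Fintype.card J := by
  simpa [content] using Finset.sum_card_fiberwise_eq_card_filter Finset.univ Finset.univ u

theorem monomial_content (u : J → Fin n) :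
    MvPolynomial.monomial (Finsupp.equivFunOnFinite.symm (content u)) (1 : ℤ) =
      ∏ j, MvPolynomial.X (u j) := by
  have h : Finsupp.equivFunOnFinite.symm (content u) = ∑ j, Finsupp.single (u j) 1 := by
    ext i
    simp [content, Finsupp.finsetSum_apply, Finsupp.single_apply]
  rw [h, MvPolynomial.monomial_sum_one]
  rfl

theorem spread_content {l : ℕ} (ι : Fin l → Fin n) (ρ : J → Fin l) :
    spread ι (content ρ) = content (ι ∘ ρ) := by
  funext i
  have := Finset.sum_card_fiberwise_eq_card_filter Finset.univ
    (Finset.univ.filter fun k => ι k = i) ρ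
  simpa [spread, content, Finset.sum_filter] using this

theorem exists_monotone_content_eq {N : ℕ} (f : Fin n → ℕ) (hf : ∑ i, f i = N) :
    ∃ u : Fin N → Fin n, Monotone u ∧ content u = f := by
  have e : Fin N ≃ (i : Fin n) × Fin (f i) := Fintype.equivOfCardEq (by simp [hf])
  refine ⟨_, Tuple.monotone_sort fun j => (e j).1, ?_⟩
  funext i
  rw [content, ← Fintype.card_subtype, ← Fintype.card_fin (f i)]
  refine Fintype.card_congr <| (((Tuple.sort fun j => (e j).1).trans e).subtypeEquiv
    (q := fun x => x.1 = i) fun j => Iff.rfl).trans (Equiv.sigmaSubtype i)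

variable [LinearOrder J]

theorem isLowerSet_filter_lt {u : J → Fin n} (hu : Monotone u) (k : ℕ) :
    IsLowerSet ((Finset.univ.filter fun j => (u j : ℕ) < k : Finset J) : Set J) := by
  intro j j' h hj
  simp only [Finset.coe_filter, Finset.mem_univ, true_and, Set.mem_ofPred_eq] at hj ⊢
  exact lt_of_le_of_lt (hu h) hj

variable {u v : J → Fin n}

theorem psum_content_le_psum_content_iff (hu : Monotone u) (hv : Monotone v) (k m : ℕ) :
    psum (content u) k ≤ psum (content v) m ↔ ∀ j, (u j : ℕ) < k → (v j : ℕ) < m := by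
  rw [psum_content, psum_content, card_le_card_iff_subset_of_isLowerSet
    (isLowerSet_filter_lt hu k) (isLowerSet_filter_lt hv m)]
  simp [Finset.subset_iff]

theorem dominates_content_iff (hu : Monotone u) (hv : Monotone v) :
    Dominates (content u) (content v) ↔ u ≤ v := by
  simp only [Dominates, psum_content_le_psum_content_iff hv hu]
  refine ⟨fun h j => ?_, fun h k j hj => lt_of_le_of_lt (h j) hj⟩
  exact Nat.le_of_lt_succ (h (v j).succ j (Nat.lt_succ_self _))

theorem refines_flat_content_iff (hu : Monotone u) (hv : Monotone v) :
    Refines (flat (content u)) (flat (content v)) ↔ ∀ j j', v j < v j' → u j < u j' := by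
  have psum_eq_iff (k m : ℕ) : psum (content u) k = psum (content v) m ↔
      ∀ j, (u j : ℕ) < k ↔ (v j : ℕ) < m := by
    rw [le_antisymm_iff, psum_content_le_psum_content_iff hu hv,
      psum_content_le_psum_content_iff hv hu, ← forall_and]
    exact forall_congr' fun j => iff_def.symm
  simp only [refines_flat_iff, sum_content, true_and, Set.range_subset_iff, Set.mem_range,
    psum_eq_iff]
  constructor
  · intro h j j' hj
    obtain ⟨k, hk⟩ := h (v j')
    have hk' : k ≤ (u j' : ℕ) := not_lt.1 fun h' => lt_irrefl _ ((hk j').1 h')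
    exact Fin.lt_def.2 (lt_of_lt_of_le ((hk j).2 hj) hk')
  · intro h m
    by_cases hm : ∃ j, m ≤ (v j : ℕ)
    · obtain ⟨j₀, hj₀, hmin⟩ : ∃ j₀, m ≤ (v j₀ : ℕ) ∧ ∀ j, m ≤ (v j : ℕ) → j₀ ≤ j := by
        simpa using Finset.exists_min_image {j | m ≤ (v j : ℕ)} id (by simpa [Finset.Nonempty])
      refine ⟨u j₀, fun j => ⟨fun hj => ?_, fun hj => h j j₀ (lt_of_lt_of_le (b := m) hj hj₀)⟩⟩
      exact not_le.1 fun hj' => not_le.2 hj (hu (hmin j hj'))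
    · push Not at hm
      exact ⟨n, fun j => iff_of_true (u j).2 (hm j)⟩

theorem content_injOn_monotone : Set.InjOn content {u : J → Fin n | Monotone u} :=
  fun _ hu _ hv h => le_antisymm
    ((dominates_content_iff hu hv).1 (h ▸ fun _ => le_rfl))
    ((dominates_content_iff hv hu).1 (h ▸ fun _ => le_rfl))

end Content

theorem slideF_content {n N : ℕ} {w : Fin N → Fin n} (hw : Monotone w) :
    slideF (content w) =
      ∑ u : Fin N → Fin n with Monotone u ∧ u ≤ w ∧ ∀ j j', w j < w j' → u j < u j',
        ∏ j, MvPolynomial.X (u j) := by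
  refine (Finset.sum_bij (fun u _ => content u) (fun u hu => ?_) (fun u hu v hv h => ?_)
    (fun f hf => ?_) fun u _ => (monomial_content u).symm).symm
  · rw [Finset.mem_filter_univ] at hu
    rw [Finset.mem_filter, dominates_content_iff hu.1 hw, refines_flat_content_iff hu.1 hw]
    refine ⟨Fintype.mem_piFinset.2 fun i => Finset.mem_range_succ_iff.2 ?_, hu.2⟩
    rw [sum_content, ← sum_content u]
    exact Finset.single_le_sum (fun _ _ => Nat.zero_le _) (Finset.mem_univ i)
  · exact content_injOn_monotone (Finset.mem_filter.1 hu).2.1 (Finset.mem_filter.1 hv).2.1 h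
  · obtain ⟨-, hdom, href⟩ := Finset.mem_filter.1 hf
    obtain ⟨u, hu, rfl⟩ := exists_monotone_content_eq (N := N) f
      (by rw [← (refines_flat_iff.1 href).1, sum_content, Fintype.card_fin])
    rw [dominates_content_iff hu hw] at hdom
    rw [refines_flat_content_iff hu hw] at href
    exact ⟨u, (Finset.mem_filter_univ u).2 ⟨hu, hdom, href⟩, rfl⟩

section ChainSum

variable {α τ R : Type*} [LinearOrder τ] [CommSemiring R]

/-- The generating function, with weights `w`, of the weakly increasing sequences whose `j`-th term
lies in the set `S z` attached to the `j`-th letter `z` of `C`. -/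
def chainSum (w : τ → R) (S : α → Finset τ) (C : List α) : R :=
  ∑ u ∈ Fintype.piFinset fun j => S (C.get j) with Monotone u, ∏ j, w (u j)

/-- The family obtained from `S` by discarding the values below `t`: what is left to choose from
after the term `t` of a weakly increasing sequence. -/
def above (S : α → Finset τ) (t : τ) : α → Finset τ :=
  fun z => {r ∈ S z | t ≤ r}

theorem above_above (S : α → Finset τ) {t r : τ} (h : t ≤ r) : above (above S t) r = above S r := by
  funext z
  ext q
  simp only [above, Finset.mem_filter]
  exact ⟨fun hq => ⟨hq.1.1, hq.2⟩, fun hq => ⟨⟨hq.1, h.trans hq.2⟩, hq.2⟩⟩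

theorem monotone_cons_iff {β : Type*} [Preorder β] {m : ℕ} {t : β} {u : Fin m → β} :
    Monotone (Fin.cons t u : Fin (m + 1) → β) ↔ (∀ j, t ≤ u j) ∧ Monotone u := by
  refine ⟨fun h => ⟨fun j => h (Fin.zero_le j.succ), fun j j' hj => h (Fin.succ_le_succ_iff.2 hj)⟩,
    fun ⟨ht, hu⟩ => ?_⟩
  refine Fin.cases (Fin.cases (fun _ => le_rfl) fun j _ => ht j)
    fun j => Fin.cases ?_ fun j' h => ?_
  · exact fun h => absurd h (by simp)
  · exact hu (Fin.succ_le_succ_iff.1 h)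

theorem sum_sum_eq_of_disjoint {M : Type*} [AddCommMonoid M] {s s' : Finset τ}
    (h : Disjoint s s') (f : τ → τ → M) :
    ∑ t ∈ s, ∑ r ∈ s', f t r =
      ∑ t ∈ s, ∑ r ∈ s' with t ≤ r, f t r + ∑ r ∈ s', ∑ t ∈ s with r ≤ t, f t r := by
  have hcomm : ∑ r ∈ s', ∑ t ∈ s with r ≤ t, f t r = ∑ t ∈ s, ∑ r ∈ s' with ¬ t ≤ r, f t r := by
    refine Finset.sum_comm' fun r t => ?_
    simp only [Finset.mem_filter]
    refine ⟨fun ⟨hr, ht, hrt⟩ => ⟨⟨hr, fun htr => ?_⟩, ht⟩, fun ⟨⟨hr, hrt⟩, ht⟩ =>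
      ⟨hr, ht, (not_le.1 hrt).le⟩⟩
    exact Finset.disjoint_left.1 h ht (le_antisymm htr hrt ▸ hr)
  rw [hcomm, ← Finset.sum_add_distrib]
  exact Finset.sum_congr rfl fun t _ => (Finset.sum_filter_add_sum_filter_not _ _ _).symm

variable (w : τ → R) (S : α → Finset τ)

theorem chainSum_nil : chainSum w S [] = 1 := by
  simp [chainSum, Finset.filter_true_of_mem, Subsingleton.monotone]

theorem chainSum_cons (z : α) (C : List α) :
    chainSum w S (z :: C) = ∑ t ∈ S z, w t * chainSum w (above S t) C := by
  simp only [chainSum, Finset.mul_sum]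
  rw [Finset.sum_sigma']
  have hmem (t : τ) (u : Fin C.length → τ) :
      (Fin.cons t u : Fin (z :: C).length → τ) ∈
          {u ∈ Fintype.piFinset fun j => S ((z :: C).get j) | Monotone u} ↔
        t ∈ S z ∧ u ∈ {u ∈ Fintype.piFinset fun j => above S t (C.get j) | Monotone u} := by
    simp only [Finset.mem_filter, Fintype.mem_piFinset, above, List.length_cons]
    rw [monotone_cons_iff, Fin.forall_fin_succ, forall_and]
    tauto
  refine Finset.sum_nbij' (fun u => ⟨u 0, Fin.tail u⟩) (fun x => Fin.cons x.1 x.2)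
    (fun u hu => ?_) (fun x hx => ?_) (fun u _ => Fin.cons_self_tail u) (fun _ _ => rfl)
    fun u _ => Fin.prod_univ_succ _
  · rw [Finset.mem_sigma, ← hmem]
    rwa [← Fin.cons_self_tail u] at hu
  · exact (hmem _ _).2 (Finset.mem_sigma.1 hx)

theorem sum_map_chainSum_cons (z : α) (M : Multiset (List α)) :
    ((M.map (z :: ·)).map (chainSum w S)).sum =
      ∑ t ∈ S z, w t * (M.map (chainSum w (above S t))).sum := by
  simp only [Multiset.map_map, Function.comp_def, chainSum_cons, ← Multiset.sum_map_mul_left]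
  exact Multiset.sum_map_sum_map _ _

/-- Two weakly increasing sequences without common terms merge into a weakly increasing sequence in
exactly one way. -/
theorem chainSum_mul (w : τ → R) (S : ℕ → Finset τ) (A B : List ℕ)
    (h : ∀ x ∈ A, ∀ y ∈ B, Disjoint (S x) (S y)) :
    chainSum w S A * chainSum w S B = ((shuffles A B).map (chainSum w S)).sum := by
  induction A, B using shuffles.induct generalizing S with
  | case1 B => simp [shuffles, chainSum_nil]
  | case2 A hA => cases A <;> simp [shuffles, chainSum_nil]
  | case3 x A y B ihA ihB =>
    have hdisj (t) : ∀ x' ∈ x :: A, ∀ y' ∈ y :: B, Disjoint (above S t x') (above S t y') :=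
      fun x' hx' y' hy' =>
        (h x' hx' y' hy').mono (Finset.filter_subset _ _) (Finset.filter_subset _ _)
    have hA (t) : w t * ((shuffles A (y :: B)).map (chainSum w (above S t))).sum =
        ∑ r ∈ S y with t ≤ r,
          w t * chainSum w (above S t) A * (w r * chainSum w (above S r) B) := by
      rw [← ihA _ fun x' hx' => hdisj t x' (List.mem_cons_of_mem _ hx'), chainSum_cons, ← mul_assoc,
        Finset.mul_sum]
      exact Finset.sum_congr rfl fun r hr => by rw [above_above S (Finset.mem_filter.1 hr).2]
    have hB (r) : w r * ((shuffles (x :: A) B).map (chainSum w (above S r))).sum =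
        ∑ t ∈ S x with r ≤ t,
          w t * chainSum w (above S t) A * (w r * chainSum w (above S r) B) := by
      rw [← ihB _ fun x' hx' y' hy' => hdisj r x' hx' y' (List.mem_cons_of_mem _ hy'),
        chainSum_cons, mul_left_comm, Finset.sum_mul]
      exact Finset.sum_congr rfl fun t ht => by rw [above_above S (Finset.mem_filter.1 ht).2]
    rw [shuffles, Multiset.map_add, Multiset.sum_add, sum_map_chainSum_cons, sum_map_chainSum_cons,
      Finset.sum_congr rfl fun t _ => hA t, Finset.sum_congr rfl fun r _ => hB r,
      chainSum_cons, chainSum_cons, Finset.sum_mul_sum]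
    exact sum_sum_eq_of_disjoint (h x (by simp) y (by simp)) _

end ChainSum

section Placement

variable {n : ℕ} {d : ℕ → ℕ} {C : List ℕ}

/-- `p` places the letters of the word `C` in weakly increasing positions, strictly increasing
across descents of `C`, so that no letter `z` lies beyond position `d z`. -/
structure IsPlacement (d : ℕ → ℕ) (C : List ℕ) (p : Fin C.length → Fin n) : Prop where
  monotone : Monotone p
  lt_of_descent : ∀ ⦃j j'⦄, j ≤ j' → C.get j' < C.get j → p j < p j'
  le_bound : ∀ j, (p j : ℕ) ≤ d (C.get j)

/-- The generating polynomial of the placements of `C` in the positions `0, …, n - 1`. -/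
noncomputable def placementSum (n : ℕ) (d : ℕ → ℕ) (C : List ℕ) : MvPolynomial (Fin n) ℤ :=
  ∑ p : Fin C.length → Fin n with IsPlacement d C p, ∏ j, MvPolynomial.X (p j)

/-- The admissible biletters `(i, z)`, ordered lexicographically, with second entry `z`. -/
def biletters (n : ℕ) (d : ℕ → ℕ) (z : ℕ) : Finset (Fin n ×ₗ ℕ) :=
  Finset.image (fun i => toLex (i, z)) {i : Fin n | (i : ℕ) ≤ d z}

theorem mem_biletters {z : ℕ} {t : Fin n ×ₗ ℕ} :
    t ∈ biletters n d z ↔ (ofLex t).2 = z ∧ ((ofLex t).1 : ℕ) ≤ d z := by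
  simp only [biletters, Finset.mem_image, Finset.mem_filter_univ]
  exact ⟨fun ⟨i, hi, ht⟩ => ht ▸ ⟨rfl, hi⟩, fun ⟨h, hi⟩ => ⟨_, hi, h ▸ rfl⟩⟩

theorem monotone_toLex_iff {p : Fin C.length → Fin n} :
    Monotone (fun j => toLex (p j, C.get j)) ↔
      Monotone p ∧ ∀ ⦃j j'⦄, j ≤ j' → C.get j' < C.get j → p j < p j' := by
  simp only [Monotone, Prod.Lex.toLex_le_toLex]
  refine ⟨fun h => ⟨fun j j' hj => ?_, fun j j' hj hC => ?_⟩, fun ⟨hp, hd⟩ j j' hj => ?_⟩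
  · exact (h hj).elim le_of_lt fun h' => h'.1.le
  · exact (h hj).resolve_right fun h' => absurd hC h'.2.not_gt
  · rcases lt_or_ge (C.get j') (C.get j) with hC | hC
    · exact Or.inl (hd hj hC)
    · exact (hp hj).lt_or_eq.imp_right fun h' => ⟨h', hC⟩

theorem placementSum_eq_chainSum (n : ℕ) (d : ℕ → ℕ) (C : List ℕ) :
    placementSum n d C =
      chainSum (fun t => MvPolynomial.X (ofLex t).1) (biletters n d) C := by
  have hmem (u : Fin C.length → Fin n ×ₗ ℕ) :
      u ∈ {u ∈ Fintype.piFinset fun j => biletters n d (C.get j) | Monotone u} ↔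
        (∀ j, (ofLex (u j)).2 = C.get j ∧ ((ofLex (u j)).1 : ℕ) ≤ d (C.get j)) ∧ Monotone u := by
    simp only [Finset.mem_filter, Fintype.mem_piFinset, mem_biletters]
  refine Finset.sum_nbij' (fun p j => toLex (p j, C.get j)) (fun u j => (ofLex (u j)).1)
    (fun p hp => ?_) (fun u hu => ?_) (fun _ _ => rfl) (fun u hu => ?_) fun _ _ => rfl
  · obtain ⟨hp, hdesc, hle⟩ := (Finset.mem_filter_univ p).1 hp
    exact (hmem _).2 ⟨fun j => ⟨rfl, hle j⟩, monotone_toLex_iff.2 ⟨hp, hdesc⟩⟩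
  all_goals
    obtain ⟨hle, hmono⟩ := (hmem u).1 hu
    have hu' : (fun j => toLex ((ofLex (u j)).1, C.get j)) = u :=
      funext fun j => congrArg toLex (Prod.ext rfl (hle j).1.symm)
  · obtain ⟨hp, hdesc⟩ := monotone_toLex_iff.1 (hu'.symm ▸ hmono)
    exact (Finset.mem_filter_univ _).2 ⟨hp, hdesc, fun j => (hle j).2⟩
  · exact hu'

theorem placementSum_mul {A B : List ℕ} (h : ∀ x ∈ A, ∀ y ∈ B, x ≠ y) :
    placementSum n d A * placementSum n d B =
      ((shuffles A B).map (placementSum n d)).sum := by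
  simp only [funext (placementSum_eq_chainSum n d)]
  refine chainSum_mul _ _ A B fun x hx y hy => Finset.disjoint_left.2 fun t ht ht' => ?_
  exact h x hx y hy ((mem_biletters.1 ht).1.symm.trans (mem_biletters.1 ht').1)

theorem placementSum_eq_slideF {w : Fin C.length → Fin n} (hw : Monotone w)
    (h : ∀ p, IsPlacement d C p ↔ Monotone p ∧ p ≤ w ∧ ∀ j j', w j < w j' → p j < p j') :
    placementSum n d C = slideF (content w) := by
  rw [slideF_content hw, placementSum]
  exact Finset.sum_congr (by simp only [h]) fun _ _ => rfl

end Placement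

section Block

variable {n l : ℕ} {α : Type*}

theorem countP_ofFn {m : ℕ} (f : Fin m → α) (P : α → Bool) :
    (List.ofFn f).countP P = (Finset.univ.filter fun j => P (f j)).card := by
  have := (List.nodup_finRange m).card_eq_countP (P := fun j => P (f j))
  simpa [List.ofFn_eq_map, List.countP_map, Function.comp_def] using this.symm

theorem countP_eq_card (C : List α) (P : α → Bool) :
    C.countP P = (Finset.univ.filter fun j => P (C.get j)).card := by
  conv_lhs => rw [← List.ofFn_get C, countP_ofFn]

/-- `C` is the concatenation of the blocks `R 0, …, R (l - 1)` and `ρ` sends each letter of `C` to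
the index of its block: tagging the letters of `C` by `ρ` spells out the tagged blocks. -/
def IsBlockIndex (C : List α) (R : Fin l → List α) (ρ : Fin C.length → Fin l) : Prop :=
  (List.ofFn fun j => (C.get j, ρ j)) = (List.ofFn fun k => (R k).map fun z => (z, k)).flatten

theorem exists_isBlockIndex {C : List α} {R : Fin l → List α} (hC : (List.ofFn R).flatten = C) :
    ∃ ρ, IsBlockIndex C R ρ := by
  obtain ⟨T, hT⟩ : ∃ T, (List.ofFn fun k => (R k).map fun z => (z, k)).flatten = T := ⟨_, rfl⟩
  have hfst : T.map Prod.fst = C := by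
    simp [← hT, ← hC, List.map_flatten, List.map_ofFn, Function.comp_def]
  subst hfst
  refine ⟨fun j => (T.get (j.cast (List.length_map _))).2, ?_⟩
  rw [IsBlockIndex, hT]
  exact List.ext_getElem (by simp) fun i _ _ => by simp

namespace IsBlockIndex

variable {C : List α} {R : Fin l → List α} {ρ : Fin C.length → Fin l}

theorem lt_or_rel (h : IsBlockIndex C R ρ) {r : α → α → Prop} (hR : ∀ k, (R k).Pairwise r)
    ⦃j j' : Fin C.length⦄ (hj : j < j') : ρ j < ρ j' ∨ ρ j = ρ j' ∧ r (C.get j) (C.get j') := by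
  have hpairs : (List.ofFn fun j => (C.get j, ρ j)).Pairwise
      fun s t => s.2 < t.2 ∨ s.2 = t.2 ∧ r s.1 t.1 := by
    rw [h, List.pairwise_flatten, List.pairwise_ofFn]
    refine ⟨fun L hL => ?_, fun k k' hk s hs t ht => ?_⟩
    · obtain ⟨k, rfl⟩ := (List.mem_ofFn' _ _).1 hL
      exact List.pairwise_map.2 ((hR k).imp fun hr => Or.inr ⟨rfl, hr⟩)
    · obtain ⟨x, -, rfl⟩ := List.mem_map.1 hs
      obtain ⟨y, -, rfl⟩ := List.mem_map.1 ht
      exact Or.inl hk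
  exact List.pairwise_ofFn.1 hpairs hj

theorem monotone (h : IsBlockIndex C R ρ) : Monotone ρ := fun j j' hj => by
  rcases hj.eq_or_lt with rfl | hj
  · exact le_rfl
  · exact (h.lt_or_rel (fun k => List.pairwise_of_forall (R := fun _ _ => True) fun _ _ => trivial)
      hj).elim le_of_lt fun hj => hj.1.le

theorem countP_eq (h : IsBlockIndex C R ρ) (k : Fin l) (P : α → Bool) :
    (R k).countP P = (Finset.univ.filter fun j => P (C.get j) ∧ ρ j = k).card := by
  have htag := countP_ofFn (fun j => (C.get j, ρ j)) fun t => P t.1 && decide (t.2 = k)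
  rw [h, List.countP_flatten, List.map_ofFn, List.sum_ofFn, Finset.sum_eq_single k] at htag
  · simpa [List.countP_map, Function.comp_def] using htag
  · intro k' _ hk
    simp [List.countP_map, Function.comp_def, hk]
  · simp

theorem length_eq_content (h : IsBlockIndex C R ρ) : (fun k => (R k).length) = content ρ :=
  funext fun k => by simpa [content] using h.countP_eq k fun _ => true

theorem countP_eq_content (h : IsBlockIndex C R ρ) (P : α → Bool) :
    (fun k => (R k).countP P) = content fun j : {j // P (C.get j)} => ρ j := by
  funext k
  rw [h.countP_eq, content, ← Finset.filter_filter, Finset.filter_comm, ← Finset.card_subtype]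
  exact congrArg Finset.card (by ext; simp)

theorem mem_iff (h : IsBlockIndex C R ρ) {k : Fin l} {z : α} :
    z ∈ R k ↔ ∃ j, ρ j = k ∧ C.get j = z := by
  have hmem : (z, k) ∈ (List.ofFn fun k => (R k).map fun z => (z, k)).flatten ↔ z ∈ R k := by
    simp [List.mem_ofFn', Set.mem_range]
  rw [← hmem, ← h]
  simp [and_comm]

end IsBlockIndex

/-- The word `g 0, …, g 0, g 1, …, g 1, …` in which the letter `g i` is repeated `a i` times. -/
def blockWord (a : Fin n → ℕ) (g : Fin n → α) : List α :=
  (List.ofFn fun i => List.replicate (a i) (g i)).flatten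

theorem exists_eq_of_mem_blockWord {a : Fin n → ℕ} {g : Fin n → α} {z : α}
    (h : z ∈ blockWord a g) : ∃ i, z = g i := by
  obtain ⟨L, hL, hz⟩ := List.mem_flatten.1 h
  obtain ⟨i, rfl⟩ := (List.mem_ofFn' _ _).1 hL
  exact ⟨i, List.eq_of_mem_replicate hz⟩

theorem exists_monotone_index_blockWord (a : Fin n → ℕ) (g : Fin n → α) :
    ∃ ρ : Fin (blockWord a g).length → Fin n,
      Monotone ρ ∧ content ρ = a ∧ ∀ j, (blockWord a g).get j = g (ρ j) := by
  obtain ⟨ρ, hρ⟩ := exists_isBlockIndex (C := blockWord a g) rfl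
  refine ⟨ρ, hρ.monotone, ?_, fun j => ?_⟩
  · rw [← hρ.length_eq_content]
    simp
  · exact List.eq_of_mem_replicate (hρ.mem_iff.2 ⟨j, rfl, rfl⟩)

theorem placementSum_blockWord {d : ℕ → ℕ} {g : Fin n → ℕ} (hg : StrictAnti g)
    (hd : ∀ i, d (g i) = i) (a : Fin n → ℕ) :
    placementSum n d (blockWord a g) = slideF a := by
  obtain ⟨ρ, hρ, hρa, hletter⟩ := exists_monotone_index_blockWord a g
  conv_rhs => rw [← hρa]
  refine placementSum_eq_slideF hρ fun p => ?_
  have hlt {j j'} : g (ρ j') < g (ρ j) ↔ ρ j < ρ j' := hg.lt_iff_gt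
  constructor
  · rintro ⟨hp, hdesc, hle⟩
    simp only [hletter, hd, hlt] at hdesc hle
    exact ⟨hp, hle, fun j j' h => hdesc (hρ.reflect_lt h).le h⟩
  · rintro ⟨hp, hle, hdesc⟩
    refine ⟨hp, ?_, ?_⟩ <;> simp only [hletter, hd, hlt]
    · exact fun j j' _ => hdesc j j'
    · exact hle

end Block

section Bump

variable {n : ℕ} {d : ℕ → ℕ} {C : List ℕ} {ρ : Fin C.length → Fin (runsWeak C).length}

theorem runsWeak_eq_splitBy (C : List ℕ) : runsWeak C = C.splitBy (· ≤ ·) := by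
  induction C with
  | nil => rfl
  | cons x C ih =>
    cases C with
    | nil => rfl
    | cons y C =>
      obtain ⟨r, rs, hr⟩ := List.exists_cons_of_ne_nil
        (List.splitBy_ne_nil (r := (· ≤ ·)).2 (List.cons_ne_nil y C))
      rw [hr] at ih
      simp only [runsWeak.eq_def (x :: y :: C), ih]
      obtain ⟨hflat, hne, hchain, hdesc⟩ := List.splitBy_eq_iff.1 hr
      by_cases hxy : x ≤ y
      · obtain ⟨z, r, rfl⟩ := List.exists_cons_of_ne_nil fun h : r = [] => hne (by simp [h])
        obtain ⟨rfl, -⟩ := List.cons.inj hflat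
        rw [List.forall_mem_cons] at hchain
        simp only [if_pos hxy]
        refine (List.splitBy_eq_iff.2 ⟨by simp [hflat], by simpa using hne, ?_, ?_⟩).symm
        · exact List.forall_mem_cons.2 ⟨hchain.1.cons_cons (by simpa using hxy), hchain.2⟩
        · cases rs with
          | nil => exact List.isChain_singleton _
          | cons s rs => simpa [List.isChain_cons_cons] using hdesc
      · simp only [if_neg hxy]
        have := List.splitBy_append_cons (r := (· ≤ ·)) (l := [x]) C (a := y) (by simpa using hxy)
        rw [hr] at this
        exact this.symm

theorem flatten_runsWeak (C : List ℕ) : (runsWeak C).flatten = C := by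
  rw [runsWeak_eq_splitBy, List.flatten_splitBy]

theorem ne_nil_of_mem_runsWeak {r : List ℕ} (hr : r ∈ runsWeak C) : r ≠ [] :=
  List.ne_nil_of_mem_splitBy (runsWeak_eq_splitBy C ▸ hr)

theorem pairwise_le_of_mem_runsWeak {r : List ℕ} (hr : r ∈ runsWeak C) : r.Pairwise (· ≤ ·) := by
  rw [runsWeak_eq_splitBy] at hr
  simpa only [decide_eq_true_eq, List.isChain_iff_pairwise] using List.isChain_of_mem_splitBy hr

theorem isChain_descent_runsWeak (C : List ℕ) :
    (runsWeak C).IsChain fun r s => ∃ x ∈ r, ∃ y ∈ s, y < x := by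
  rw [runsWeak_eq_splitBy]
  refine (List.isChain_getLast_head_splitBy _ C).imp fun r s ⟨hr, hs, h⟩ => ?_
  exact ⟨_, List.getLast_mem hr, _, List.head_mem hs, not_le.1 (of_decide_eq_false h)⟩

theorem exists_isBlockIndex_runsWeak (C : List ℕ) : ∃ ρ, IsBlockIndex C (runsWeak C).get ρ :=
  exists_isBlockIndex (by rw [List.ofFn_get, flatten_runsWeak])

namespace IsBlockIndex

theorem surjective_run (hρ : IsBlockIndex C (runsWeak C).get ρ) : Function.Surjective ρ := by
  intro k
  obtain ⟨z, hz⟩ := List.exists_mem_of_ne_nil _ (ne_nil_of_mem_runsWeak (List.get_mem _ k))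
  obtain ⟨j, hj, -⟩ := hρ.mem_iff.1 hz
  exact ⟨j, hj⟩

theorem get_le_of_run_eq (hρ : IsBlockIndex C (runsWeak C).get ρ) {j j' : Fin C.length}
    (hj : j ≤ j') (h : ρ j = ρ j') : C.get j ≤ C.get j' := by
  rcases hj.eq_or_lt with rfl | hj
  · exact le_rfl
  · have := hρ.lt_or_rel (fun k => pairwise_le_of_mem_runsWeak (List.get_mem _ k)) hj
    exact (this.resolve_left h.not_lt).2

theorem exists_descent (hρ : IsBlockIndex C (runsWeak C).get ρ) {j j' : Fin C.length}
    (h : ρ j < ρ j') :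
    ∃ x y, j ≤ x ∧ x ≤ y ∧ y ≤ j' ∧ C.get y < C.get x := by
  have hnext : (ρ j : ℕ) + 1 < (runsWeak C).length := lt_of_le_of_lt h (ρ j').2
  obtain ⟨u, hu, v, hv, hvu⟩ := List.isChain_iff_getElem.1 (isChain_descent_runsWeak C) _ hnext
  obtain ⟨x, hx, rfl⟩ := hρ.mem_iff (k := ρ j).1 hu
  obtain ⟨y, hy, rfl⟩ := hρ.mem_iff (k := ⟨ρ j + 1, hnext⟩).1 hv
  have hxj : ρ (max j x) = ρ j := by rw [hρ.monotone.map_max, hx, max_self]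
  have hyj : ρ (min y j') = ρ y := by
    rw [hρ.monotone.map_min, hy, min_eq_left]
    exact h
  refine ⟨max j x, min y j', le_max_left _ _, le_of_lt (hρ.monotone.reflect_lt ?_),
    min_le_right _ _, ?_⟩
  · rw [hxj, hyj, hy]
    exact Nat.lt_succ_self _
  · calc C.get (min y j') ≤ C.get y := hρ.get_le_of_run_eq (min_le_left _ _) hyj
      _ < C.get x := hvu
      _ ≤ C.get (max j x) := hρ.get_le_of_run_eq (le_max_right _ _) (hx.trans hxj.symm)

theorem lt_of_isPlacement (hρ : IsBlockIndex C (runsWeak C).get ρ)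
    {p : Fin C.length → Fin n} (hp : IsPlacement d C p) {j j' : Fin C.length} (h : ρ j < ρ j') :
    p j < p j' := by
  obtain ⟨x, y, hjx, hxy, hyj, hC⟩ := hρ.exists_descent h
  exact (hp.monotone hjx).trans_lt ((hp.lt_of_descent hxy hC).trans_le (hp.monotone hyj))

theorem exists_last (hρ : IsBlockIndex C (runsWeak C).get ρ)
    (k : Fin (runsWeak C).length) : ∃ j, ρ j = k ∧ ∀ i, ρ i = k → i ≤ j := by
  obtain ⟨j, hj, hmax⟩ := (Set.toFinite {j | ρ j = k}).exists_maximal (hρ.surjective_run k)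
  exact ⟨j, hj, fun i hi => le_of_not_gt fun h => h.not_ge (hmax hi h.le)⟩

end IsBlockIndex

/-- The ways of inserting zeros into `Des(C)`, recorded by the positions of the runs of `C`,
that move no letter `z` beyond position `d z`. -/
def insertions (n : ℕ) (d : ℕ → ℕ) (C : List ℕ) : Set (Fin (runsWeak C).length → Fin n) :=
  {ι | StrictMono ι ∧ ∀ k, ∀ z ∈ (runsWeak C).get k, (ι k : ℕ) ≤ d z}

theorem supClosed_insertions : SupClosed (insertions n d C) := fun ι hι ι' hι' => by
  refine ⟨fun k k' hk => max_lt_max (hι.1 hk) (hι'.1 hk), fun k z hz => ?_⟩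
  rcases max_choice (ι k) (ι' k) with h | h <;> rw [Pi.sup_apply, h]
  exacts [hι.2 k z hz, hι'.2 k z hz]

theorem exists_isGreatest_insertions (h : (insertions n d C).Nonempty) :
    ∃ ι, IsGreatest (insertions n d C) ι := by
  have hfin := Set.toFinite (insertions n d C)
  refine ⟨_, supClosed_insertions.finsetSup'_mem (t := hfin.toFinset) (f := id)
    (hfin.toFinset_nonempty.2 h) fun ι hι => hfin.mem_toFinset.1 hι, fun ι hι => ?_⟩
  exact Finset.le_sup' id (hfin.mem_toFinset.2 hι)

theorem spread_runLen (hρ : IsBlockIndex C (runsWeak C).get ρ)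
    (ι : Fin (runsWeak C).length → Fin n) : spread ι (runLen C) = content (ι ∘ ρ) := by
  rw [← spread_content, ← hρ.length_eq_content]
  rfl

theorem IsPlacement.exists_insertion (hd : Antitone d) (hρ : IsBlockIndex C (runsWeak C).get ρ)
    {p : Fin C.length → Fin n} (hp : IsPlacement d C p) :
    ∃ ι ∈ insertions n d C, p ≤ ι ∘ ρ := by
  choose last hlast hle using hρ.exists_last
  refine ⟨p ∘ last, ⟨fun k k' hk => hρ.lt_of_isPlacement hp (by rwa [hlast, hlast]),
    fun k z hz => ?_⟩, fun j => hp.monotone (hle _ j rfl)⟩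
  obtain ⟨j, rfl, rfl⟩ := hρ.mem_iff.1 hz
  exact (hp.le_bound _).trans (hd (hρ.get_le_of_run_eq (hle _ j rfl) (hlast _).symm))

theorem isPlacement_iff_of_isGreatest (hd : Antitone d) (hρ : IsBlockIndex C (runsWeak C).get ρ)
    {ι : Fin (runsWeak C).length → Fin n} (hι : IsGreatest (insertions n d C) ι)
    (p : Fin C.length → Fin n) :
    IsPlacement d C p ↔
      Monotone p ∧ p ≤ ι ∘ ρ ∧ ∀ j j', (ι ∘ ρ) j < (ι ∘ ρ) j' → p j < p j' := by
  constructor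
  · intro hp
    obtain ⟨ι', hι', hle⟩ := hp.exists_insertion hd hρ
    exact ⟨hp.monotone, fun j => (hle j).trans (hι.2 hι' _),
      fun j j' h => hρ.lt_of_isPlacement hp (hι.1.1.lt_iff_lt.1 h)⟩
  · rintro ⟨hp, hle, hlt⟩
    refine ⟨hp, fun j j' hj hC => hlt j j' (hι.1.1 ?_), fun j => ?_⟩
    · exact (hρ.monotone hj).lt_of_ne fun h => hC.not_ge (hρ.get_le_of_run_eq hj h)
    · exact (Fin.le_def.1 (hle j)).trans (hι.1.2 _ _ (hρ.mem_iff.2 ⟨j, rfl, rfl⟩))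

/-- The bump of `C` with respect to the bounds `d` on its letters, if some insertion respects
them. Larger insertions give smaller compositions in dominance order. -/
noncomputable def bump (n : ℕ) (d : ℕ → ℕ) (C : List ℕ) : Option (Fin n → ℕ) :=
  if h : ∃ ι, IsGreatest (insertions n d C) ι then some (spread h.choose (runLen C)) else none

theorem bump_eq_some_iff {c : Fin n → ℕ} :
    bump n d C = some c ↔
      ∃ ι, IsGreatest (insertions n d C) ι ∧ spread ι (runLen C) = c := by
  rw [bump]
  split_ifs with h
  · rw [Option.some_inj]
    exact ⟨fun hc => ⟨_, h.choose_spec, hc⟩, fun ⟨ι, hι, hc⟩ => h.choose_spec.unique hι ▸ hc⟩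
  · exact ⟨nofun, fun ⟨ι, hι, _⟩ => absurd ⟨ι, hι⟩ h⟩

theorem placementSum_eq_elim_bump (hd : Antitone d) (C : List ℕ) :
    placementSum n d C = (bump n d C).elim 0 slideF := by
  obtain ⟨ρ, hρ⟩ := exists_isBlockIndex_runsWeak C
  rcases hc : bump n d C with _ | c
  · refine Finset.sum_eq_zero fun p hp => ?_
    obtain ⟨ι, hι, -⟩ := ((Finset.mem_filter_univ p).1 hp).exists_insertion hd hρ
    obtain ⟨ι, hι⟩ := exists_isGreatest_insertions ⟨ι, hι⟩
    exact absurd (bump_eq_some_iff.2 ⟨ι, hι, rfl⟩) (by simp [hc])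
  · obtain ⟨ι, hι, rfl⟩ := bump_eq_some_iff.1 hc
    rw [spread_runLen hρ]
    exact placementSum_eq_slideF (hι.1.1.monotone.comp hρ.monotone)
      (isPlacement_iff_of_isGreatest hd hρ hι)

end Bump

section SlideProduct

variable {n l : ℕ} {a b c : Fin n → ℕ} {C : List ℕ}

theorem exists_monotone_content_eq_of_filter_eq {α : Type*} [PartialOrder α] {g : Fin n → α}
    (hg : StrictAnti g) {C : List α} {P : α → Bool} (hC : C.filter P = blockWord a g) :
    ∃ w : {j // P (C.get j)} → Fin n, Monotone w ∧ content w = a ∧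
      ∀ j : {j // P (C.get j)}, C.get j = g (w j) := by
  obtain ⟨ρ, hρ, hρa, hρg⟩ := exists_monotone_index_blockWord a g
  have hmem (j : {j // P (C.get j)}) : ∃ i, C.get j = g i :=
    exists_eq_of_mem_blockWord (hC ▸ List.mem_filter.2 ⟨List.get_mem _ _, j.2⟩)
  choose w hw using hmem
  refine ⟨w, fun j j' hj => ?_, funext fun i => ?_, hw⟩
  · rcases hj.eq_or_lt with rfl | hj
    · exact le_rfl
    have hanti : (blockWord a g).Pairwise (· ≥ ·) := List.pairwise_iff_get.2 fun i i' hi => by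
      rw [hρg, hρg]
      exact hg.antitone (hρ hi.le)
    rw [← hC, List.pairwise_filter, List.pairwise_iff_get] at hanti
    have := hanti j j' hj j.2 j'.2
    rwa [hw, hw, ge_iff_le, hg.le_iff_ge] at this
  · symm
    calc a i
        = (blockWord a g).countP fun z => decide (z = g i) := by
          rw [countP_eq_card]
          simp only [hρg, hg.injective.eq_iff, decide_eq_true_eq]
          exact congrFun hρa.symm i
      _ = (Finset.univ.filter fun j => P (C.get j) ∧ C.get j = g i).card := by
          rw [← hC, List.countP_filter, countP_eq_card]
          simp [and_comm]
      _ = content w i := by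
          rw [content, ← Finset.filter_filter, Finset.filter_comm, ← Finset.card_subtype]
          exact congrArg Finset.card (Finset.ext fun j => by
            simp only [Finset.mem_subtype, Finset.mem_filter_univ, hw, hg.injective.eq_iff])

theorem dominates_spread_countP_iff {g : Fin n → ℕ} {d : ℕ → ℕ} (hg : StrictAnti g)
    (hd : ∀ i, d (g i) = i) {R : Fin l → List ℕ} {ρ : Fin C.length → Fin l}
    (hρ : IsBlockIndex C R ρ) {P : ℕ → Bool} (hC : C.filter P = blockWord a g)
    {ι : Fin l → Fin n} (hι : Monotone ι) :
    Dominates (spread ι fun k => (R k).countP P) a ↔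
      ∀ k, ∀ z ∈ R k, P z → (ι k : ℕ) ≤ d z := by
  obtain ⟨w, hw, rfl, hwg⟩ := exists_monotone_content_eq_of_filter_eq hg hC
  have hmono : Monotone (ι ∘ fun j : {j // P (C.get j)} => ρ j) := fun _ _ h => hι (hρ.monotone h)
  rw [hρ.countP_eq_content, spread_content, dominates_content_iff hmono hw]
  constructor
  · intro h k z hz hP
    obtain ⟨j, rfl, rfl⟩ := hρ.mem_iff.1 hz
    have := h ⟨j, hP⟩
    rwa [Fin.le_def, ← hd (w _), ← hwg] at this
  · intro h j
    rw [Fin.le_def, ← hd (w j), ← hwg]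
    exact h _ _ (hρ.mem_iff.2 ⟨j, rfl, rfl⟩) j.2

theorem dominates_spread_runLen_iff {ι ι' : Fin (runsWeak C).length → Fin n} (hι : Monotone ι)
    (hι' : Monotone ι') :
    Dominates (spread ι (runLen C)) (spread ι' (runLen C)) ↔ ι ≤ ι' := by
  obtain ⟨ρ, hρ⟩ := exists_isBlockIndex_runsWeak C
  rw [spread_runLen hρ, spread_runLen hρ,
    dominates_content_iff (hι.comp hρ.monotone) (hι'.comp hρ.monotone)]
  exact (hρ.surjective_run.forall (p := fun k => ι k ≤ ι' k)).symm

theorem filter_of_mem_shuffles {P Q : ℕ → Bool} {A B : List ℕ} (hA : ∀ x ∈ A, P x ∧ ¬ Q x)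
    (hB : ∀ y ∈ B, ¬ P y ∧ Q y) (hC : C ∈ shuffles A B) : C.filter P = A ∧ C.filter Q = B := by
  induction A, B using shuffles.induct generalizing C with
  | case1 B =>
    obtain rfl : C = B := by simpa [shuffles] using hC
    exact ⟨List.filter_eq_nil_iff.2 fun y hy => (hB y hy).1,
      List.filter_eq_self.2 fun y hy => (hB y hy).2⟩
  | case2 A _ =>
    obtain rfl : C = A := by cases A <;> simpa [shuffles] using hC
    exact ⟨List.filter_eq_self.2 fun x hx => (hA x hx).1,
      List.filter_eq_nil_iff.2 fun x hx => (hA x hx).2⟩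
  | case3 x A y B ihA ihB =>
    rw [shuffles, Multiset.mem_add, Multiset.mem_map, Multiset.mem_map] at hC
    rw [List.forall_mem_cons] at hA hB
    rcases hC with ⟨D, hD, rfl⟩ | ⟨D, hD, rfl⟩
    · obtain ⟨hP, hQ⟩ := ihA hA.2 (List.forall_mem_cons.2 hB) hD
      simp [hA.1, hP, hQ]
    · obtain ⟨hP, hQ⟩ := ihB (List.forall_mem_cons.2 hA) hB.2 hD
      simp [hB.1, hP, hQ]

theorem mod_two_of_mem_wordA {z : ℕ} (hz : z ∈ wordA a) : z % 2 = 1 := by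
  obtain ⟨i, rfl⟩ := exists_eq_of_mem_blockWord hz
  omega

theorem mod_two_of_mem_wordB {z : ℕ} (hz : z ∈ wordB b) : z % 2 = 0 := by
  obtain ⟨i, rfl⟩ := exists_eq_of_mem_blockWord hz
  omega

theorem filter_mod_two_of_mem_shuffles (hC : C ∈ shuffles (wordA a) (wordB b)) :
    C.filter (fun z => z % 2 = 1) = wordA a ∧ C.filter (fun z => z % 2 = 0) = wordB b :=
  filter_of_mem_shuffles (fun x hx => by simp [mod_two_of_mem_wordA hx])
    (fun y hy => by simp [mod_two_of_mem_wordB hy]) hC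

/-- The position of the letter `z` in the alphabets of `wordA` and `wordB`: it is `i` for both
letters `2 * n - 2 * i - 1` and `2 * n - 2 * i`. -/
def letterPos (n z : ℕ) : ℕ := (2 * n - z) / 2

theorem antitone_letterPos (n : ℕ) : Antitone (letterPos n) := fun z z' h => by
  unfold letterPos
  omega

theorem placementSum_wordA (a : Fin n → ℕ) : placementSum n (letterPos n) (wordA a) = slideF a :=
  placementSum_blockWord (fun i j h => by omega) (fun i => by unfold letterPos; omega) a

theorem placementSum_wordB (b : Fin n → ℕ) : placementSum n (letterPos n) (wordB b) = slideF b :=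
  placementSum_blockWord (fun i j h => by omega) (fun i => by unfold letterPos; omega) b

theorem runCountA_eq_countP (C : List ℕ) (k : Fin (runsWeak C).length) :
    runCountA C k = ((runsWeak C).get k).countP fun z => z % 2 = 1 :=
  List.countP_eq_length_filter.symm

theorem runCountB_eq_countP (C : List ℕ) (k : Fin (runsWeak C).length) :
    runCountB C k = ((runsWeak C).get k).countP fun z => z % 2 = 0 :=
  List.countP_eq_length_filter.symm

theorem mem_insertions_iff (hC : C ∈ shuffles (wordA a) (wordB b))
    {ι : Fin (runsWeak C).length → Fin n} :
    ι ∈ insertions n (letterPos n) C ↔ StrictMono ι ∧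
      Dominates (spread ι (runCountA C)) a ∧ Dominates (spread ι (runCountB C)) b := by
  refine and_congr_right fun hι => ?_
  obtain ⟨ρ, hρ⟩ := exists_isBlockIndex_runsWeak C
  obtain ⟨hA, hB⟩ := filter_mod_two_of_mem_shuffles hC
  simp only [funext (runCountA_eq_countP C), funext (runCountB_eq_countP C)]
  rw [dominates_spread_countP_iff (d := letterPos n) (fun i j h => by omega)
      (fun i => by unfold letterPos; omega) hρ hA hι.monotone,
    dominates_spread_countP_iff (d := letterPos n) (fun i j h => by omega)
      (fun i => by unfold letterPos; omega) hρ hB hι.monotone]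
  simp only [decide_eq_true_eq]
  refine ⟨fun h => ⟨fun k z hz _ => h k z hz, fun k z hz _ => h k z hz⟩, fun h k z hz => ?_⟩
  exact (Nat.mod_two_eq_zero_or_one z).elim (h.2 k z hz) (h.1 k z hz)

theorem isBumpS_iff (hC : C ∈ shuffles (wordA a) (wordB b)) :
    IsBumpS a b C c ↔ bump n (letterPos n) C = some c := by
  rw [bump_eq_some_iff]
  refine exists_congr fun ι => ⟨?_, ?_⟩
  · rintro ⟨hι, rfl, hA, hB, hmin⟩
    refine ⟨⟨(mem_insertions_iff hC).2 ⟨hι, hA, hB⟩, fun ι' hι' => ?_⟩, rfl⟩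
    obtain ⟨hι', hA', hB'⟩ := (mem_insertions_iff hC).1 hι'
    exact (dominates_spread_runLen_iff hι'.monotone hι.monotone).1 (hmin ι' hι' hA' hB')
  · rintro ⟨⟨hmem, hmax⟩, rfl⟩
    obtain ⟨hι, hA, hB⟩ := (mem_insertions_iff hC).1 hmem
    refine ⟨hι, rfl, hA, hB, fun ι' hι' hA' hB' => ?_⟩
    exact (dominates_spread_runLen_iff hι'.monotone hι.monotone).2
      (hmax ((mem_insertions_iff hC).2 ⟨hι', hA', hB'⟩))

theorem val_le_val_of_strictMono {ι : Fin l → Fin n} (hι : StrictMono ι) (k : Fin l) :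
    (k : ℕ) ≤ ι k := by
  have := Finset.card_le_card_of_injOn (s := Finset.Iio k) (t := Finset.Iio (ι k)) ι
    (fun i hi => by simpa using hι (by simpa using hi)) hι.injective.injOn
  rwa [Fin.card_Iio, Fin.card_Iio] at this

theorem psum_spread_le {ι : Fin l → Fin n} (hι : StrictMono ι) (f : Fin l → ℕ) (i : ℕ) :
    psum (spread ι f) i ≤ psum f i := by
  unfold psum spread
  rw [Finset.sum_comm, Finset.sum_filter]
  refine Finset.sum_le_sum fun k _ => ?_
  simp only [Finset.sum_ite_eq, Finset.mem_filter_univ]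
  have := val_le_val_of_strictMono hι k
  split_ifs <;> omega

theorem dominatesList_of_dominates_spread {α : Type*} {R : List α} (f : α → ℕ)
    {ι : Fin R.length → Fin n} (hι : StrictMono ι)
    (h : Dominates (spread ι fun k => f (R.get k)) a) : DominatesList (R.map f) a := fun i => by
  refine (h i).trans ((psum_spread_le hι _ i).trans_eq ?_)
  rw [psum_eq_sum_take, List.ofFn_comp', List.ofFn_get]

/-- The slide product `a ⧢ b`: the bumps of the shuffles of `wordA a` and `wordB b` that have one.
Such shuffles automatically belong to `SS(a,b)`. -/
noncomputable def slideProduct (a b : Fin n → ℕ) : Multiset (Fin n → ℕ) :=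
  (shuffles (wordA a) (wordB b)).filterMap (bump n (letterPos n))

theorem count_filterMap {α β : Type*} [DecidableEq β] (S : Multiset α) (f : α → Option β) (y : β) :
    (S.filterMap f).count y = (S.filter fun x => f x = some y).card := by
  induction S using Multiset.induction with
  | empty => simp
  | cons x S ih =>
    rcases h : f x with _ | z
    · simp [h, ih]
    · by_cases hz : y = z
      · subst hz
        simp [h, ih]
      · simp [h, hz, Ne.symm hz, ih]

theorem slideMult_eq_count : slideMult a b c = (slideProduct a b).count c := by
  rw [slideProduct, count_filterMap, slideMult]
  refine congrArg Multiset.card (Multiset.filter_congr fun C hC => ?_)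
  rw [← isBumpS_iff hC]
  refine ⟨fun h => h.2.2, fun h => ?_⟩
  obtain ⟨ι, hι, -, hA, hB, -⟩ := id h
  exact ⟨dominatesList_of_dominates_spread _ hι hA, dominatesList_of_dominates_spread _ hι hB, h⟩

theorem sum_map_filterMap {α β M : Type*} [AddCommMonoid M] (S : Multiset α) (f : α → Option β)
    (F : β → M) : ((S.filterMap f).map F).sum = (S.map fun x => (f x).elim 0 F).sum := by
  induction S using Multiset.induction with
  | empty => simp
  | cons x S ih => cases h : f x <;> simp [h, ih]

theorem sum_map_slideF_slideProduct (a b : Fin n → ℕ) :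
    ((slideProduct a b).map slideF).sum =
      ((shuffles (wordA a) (wordB b)).map (placementSum n (letterPos n))).sum := by
  rw [slideProduct, sum_map_filterMap]
  simp only [placementSum_eq_elim_bump (antitone_letterPos n)]

end SlideProduct

/-- the structure constants of the fundamental slide polynomials are given
by the slide product: `𝔉_a · 𝔉_b = Σ_c [c ∣ a ⧢ b] 𝔉_c`. -/
theorem fundamentalSlide_mul (n : ℕ) (a b : Fin n → ℕ) :
    slideF a * slideF b = ∑ᶠ c : Fin n → ℕ, (slideMult a b c : ℤ) • slideF c := by
  have hdisj : ∀ x ∈ wordA a, ∀ y ∈ wordB b, x ≠ y := fun x hx y hy hxy => by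
    have := mod_two_of_mem_wordA hx
    have := mod_two_of_mem_wordB hy
    omega
  calc slideF a * slideF b
      = placementSum n (letterPos n) (wordA a) * placementSum n (letterPos n) (wordB b) := by
        rw [placementSum_wordA, placementSum_wordB]
    _ = ((shuffles (wordA a) (wordB b)).map (placementSum n (letterPos n))).sum :=
        placementSum_mul hdisj
    _ = ((slideProduct a b).map slideF).sum := (sum_map_slideF_slideProduct a b).symm
    _ = ∑ᶠ c, (slideProduct a b).count c • slideF c := Multiset.sum_map_eq_finsum _ _
    _ = ∑ᶠ c, (slideMult a b c : ℤ) • slideF c := by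
        simp only [slideMult_eq_count, Nat.cast_smul_eq_nsmul]

end SlidePaper
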